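/- Let {U_θ}_{θ∈Θ} be a finite family of d_A × d_A unitary matrices forming a unitary 2-design (for every matrix X on ℂ^{d_A} ⊗ ℂ^{d_A}, (1/|Θ|) Σ_θ (U_θ ⊗ U_θ) X (U_θ ⊗ U_θ)† equals the Haar average ∫_{U(d_A)} (U ⊗ U) X (U ⊗ U)† dU). Let ρ_AB be a density matrix on ℂ^{d_A} ⊗ ℂ^{d_B} with ρ_B positive definite, and for |θ_k⟩ := U_θ|k⟩ (standard basis {|k⟩}) set ρ_B^{θ_k} = Tr_A[(|θ_k⟩⟨θ_k| ⊗ I_B) ρ_AB]. Then (1/|Θ|) · Σ_{θ∈Θ} Σ_{k=1}^{d_A} Tr[ρ_B^{−1/2} ρ_B^{θ_k} ρ_B^{−1/2} ρ_B^{θ_k}] = (1 + Tr[ρ̃_AB²])/(d_A+1); equivalently H₂(K|BΘ) = log₂(d_A+1) − log₂(2^{−H₂(A|B)} + 1). -/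

import Mathlib

open Matrix BigOperators ComplexOrder Kronecker

noncomputable section

/-- Partial trace over the first (A) tensor factor. -/
def ptraceA {dA dB : ℕ} (ρ : Matrix (Fin dA × Fin dB) (Fin dA × Fin dB) ℂ) :
    Matrix (Fin dB) (Fin dB) ℂ :=
  Matrix.of fun i j => ∑ a : Fin dA, ρ (a, i) (a, j)

/-- `ρ_B^v = Tr_A[(|v⟩⟨v| ⊗ I_B) ρ]`. -/
def condB {dA dB : ℕ} (ρ : Matrix (Fin dA × Fin dB) (Fin dA × Fin dB) ℂ)
    (v : Fin dA → ℂ) : Matrix (Fin dB) (Fin dB) ℂ :=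
  ptraceA (((vecMulVec v (star v)) ⊗ₖ (1 : Matrix (Fin dB) (Fin dB) ℂ)) * ρ)

/-- Real power of a Hermitian matrix, via the spectral decomposition (junk value `0`
on non-Hermitian matrices). -/
def mpow {n : Type*} [Fintype n] [DecidableEq n] (M : Matrix n n ℂ) (r : ℝ) :
    Matrix n n ℂ :=
  if h : M.IsHermitian then
    (h.eigenvectorUnitary : Matrix n n ℂ) *
      Matrix.diagonal (fun i => ((h.eigenvalues i ^ r : ℝ) : ℂ)) *
      star (h.eigenvectorUnitary : Matrix n n ℂ)
  else 0

/-- `ρ̃_AB = (I_A ⊗ ρ_B^{-1/4}) ρ_AB (I_A ⊗ ρ_B^{-1/4})`. -/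
def tildeRho {dA dB : ℕ} (ρ : Matrix (Fin dA × Fin dB) (Fin dA × Fin dB) ℂ) :
    Matrix (Fin dA × Fin dB) (Fin dA × Fin dB) ℂ :=
  ((1 : Matrix (Fin dA) (Fin dA) ℂ) ⊗ₖ mpow (ptraceA ρ) (-(1/4 : ℝ))) * ρ *
    ((1 : Matrix (Fin dA) (Fin dA) ℂ) ⊗ₖ mpow (ptraceA ρ) (-(1/4 : ℝ)))

/-- The pretty-good guessing probability term for a single basis vector `v`:
`Tr[ρ_B^{-1/2} ρ_B^v ρ_B^{-1/2} ρ_B^v]`. -/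
def pgTerm {dA dB : ℕ} (ρ : Matrix (Fin dA × Fin dB) (Fin dA × Fin dB) ℂ)
    (v : Fin dA → ℂ) : ℂ :=
  (mpow (ptraceA ρ) (-(1/2 : ℝ)) * condB ρ v * mpow (ptraceA ρ) (-(1/2 : ℝ)) *
    condB ρ v).trace

end

open MeasureTheory

noncomputable section

noncomputable instance (d : ℕ) : MeasurableSpace (Matrix.unitaryGroup (Fin d) ℂ) :=
  borel _

instance (d : ℕ) : BorelSpace (Matrix.unitaryGroup (Fin d) ℂ) := ⟨rfl⟩

/-!
By invariance of the Haar measure the twirl of an operator commutes with `V ⊗ V` for every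
unitary `V`. Taking `V = 1 + (z - 1) P` with `P` a projection and `z = -1, i`, and eliminating
`P ⊗ P`, it commutes with `A ⊗ 1 + 1 ⊗ A` first for projections and then, by linearity, for all
matrices `A`. Contracting these relations over matrix units `A` shows that an operator `M` with
this property satisfies `d (d M + F M) = Tr M • 1 + Tr (F M) • F`, where `F` swaps the two tensor
factors. The projection `∑ₖ |kk⟩⟨kk|` has trace `d` and is fixed by `F`, so its twirl is
`(1 + F) / (d + 1)`.

For a 2-design the averaged sum of the pretty-good terms is a linear functional of this twirl. The
functional takes the value `Tr ρ = 1` at `1` and, with `ρ_B^(-1/2)` split into two factors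
`ρ_B^(-1/4)`, the value `Tr ρ̃²` at `F`.
-/

section MatrixPower

variable {n : Type*} [Fintype n] [DecidableEq n] {M : Matrix n n ℂ}

theorem mpow_eq_cfc (M : Matrix n n ℂ) (r : ℝ) : mpow M r = cfc (fun x : ℝ => x ^ r) M := by
  by_cases h : M.IsHermitian
  · rw [h.cfc_eq, mpow, dif_pos h]
    rfl
  · rw [mpow, dif_neg h]
    exact (cfc_apply_of_not_predicate M h).symm

theorem mpow_mul_mpow (hM : M.PosDef) (r s : ℝ) : mpow M r * mpow M s = mpow M (r + s) := by
  have hpos : ∀ x ∈ spectrum ℝ M, 0 < x := by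
    rw [hM.isHermitian.spectrum_real_eq_range_eigenvalues]
    rintro _ ⟨i, rfl⟩
    exact hM.eigenvalues_pos i
  have hcont (t : ℝ) : ContinuousOn (fun x : ℝ => x ^ t) (spectrum ℝ M) :=
    finite_real_spectrum.continuousOn _
  rw [mpow_eq_cfc, mpow_eq_cfc, mpow_eq_cfc, ← cfc_mul _ _ M (hcont r) (hcont s)]
  exact cfc_congr fun x hx => (Real.rpow_add (hpos x hx) r s).symm

theorem mpow_one (hM : M.IsHermitian) : mpow M 1 = M := by
  simp only [mpow_eq_cfc, Real.rpow_one]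
  exact cfc_id' ℝ M hM

theorem mpow_zero (hM : M.IsHermitian) : mpow M 0 = 1 := by
  simp only [mpow_eq_cfc, Real.rpow_zero]
  exact cfc_const_one ℝ M hM

theorem mpow_neg_half_mul_self_mul (hM : M.PosDef) :
    mpow M (-(1 / 2)) * M * mpow M (-(1 / 2)) = 1 := by
  calc mpow M (-(1 / 2)) * M * mpow M (-(1 / 2))
      = mpow M (-(1 / 2)) * mpow M 1 * mpow M (-(1 / 2)) := by rw [mpow_one hM.isHermitian]
    _ = mpow M 0 := by rw [mpow_mul_mpow hM, mpow_mul_mpow hM]; norm_num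
    _ = 1 := mpow_zero hM.isHermitian

end MatrixPower

section Blocks

variable {m n R : Type*} [Fintype m] [Fintype n] [CommSemiring R]

/-- The identification of operators on a tensor product `m ⊗ n` with `m × m` matrices whose
entries are operators on the second factor; `(blocks M).trace` is then the partial trace of `M`
over the first factor. -/
def blocks : Matrix (m × n) (m × n) R ≃+* Matrix m m (Matrix n n R) :=
  (compRingEquiv m n R).symm

theorem blocks_apply (M : Matrix (m × n) (m × n) R) (a c : m) (i j : n) :
    blocks M a c i j = M (a, i) (c, j) := rfl

theorem blocks_kronecker_one_mul [DecidableEq n] (P : Matrix m m R)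
    (M : Matrix (m × n) (m × n) R) (a c : m) :
    blocks ((P ⊗ₖ 1) * M) a c = ∑ b, P a b • blocks M b c := by
  ext i j
  simp [blocks_apply, mul_apply, Fintype.sum_prod_type, one_apply, Matrix.sum_apply]

theorem blocks_one_kronecker_mul [DecidableEq m] (S : Matrix n n R)
    (M : Matrix (m × n) (m × n) R) (a c : m) :
    blocks ((1 ⊗ₖ S) * M) a c = S * blocks M a c := by
  ext i j
  simp [blocks_apply, mul_apply, Fintype.sum_prod_type, one_apply]

theorem trace_blocks_trace (M : Matrix (m × n) (m × n) R) :
    (blocks M).trace.trace = M.trace := by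
  simp only [trace, diag_apply, Matrix.sum_apply, blocks_apply, Fintype.sum_prod_type]
  exact Finset.sum_comm

end Blocks

section SwapMatrix

variable {n R : Type*} [Fintype n] [DecidableEq n] [CommSemiring R]

variable (n R) in
/-- The operator `F` exchanging the two tensor factors, `F (x ⊗ y) = y ⊗ x`. -/
def swapMatrix : Matrix (n × n) (n × n) R :=
  Equiv.Perm.permMatrix R (Equiv.prodComm n n)

theorem swapMatrix_mul_apply (M : Matrix (n × n) (n × n) R) (p q : n × n) :
    (swapMatrix n R * M) p q = M p.swap q := by
  simp [swapMatrix, PEquiv.toMatrix_toPEquiv_mul]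

theorem mul_swapMatrix_apply (M : Matrix (n × n) (n × n) R) (p q : n × n) :
    (M * swapMatrix n R) p q = M p q.swap := by
  simp [swapMatrix, PEquiv.mul_toMatrix_toPEquiv]

theorem swapMatrix_mul_kronecker (A B : Matrix n n R) :
    swapMatrix n R * (A ⊗ₖ B) = (B ⊗ₖ A) * swapMatrix n R := by
  ext p q
  rw [swapMatrix_mul_apply, mul_swapMatrix_apply]
  exact mul_comm _ _

end SwapMatrix

section KroneckerSum

variable {n R : Type*} [DecidableEq n] [CommRing R]

/-- The Kronecker sum `A ⊗ 1 + 1 ⊗ A`, the derivative at `0` of `t ↦ exp (tA) ⊗ exp (tA)`. It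
linearizes the condition of commuting with all `V ⊗ V`. -/
def kroneckerSum : Matrix n n R →ₗ[R] Matrix (n × n) (n × n) R where
  toFun A := A ⊗ₖ 1 + 1 ⊗ₖ A
  map_add' A B := by
    rw [add_kronecker, kronecker_add]
    abel
  map_smul' c A := by
    rw [smul_kronecker, kronecker_smul, RingHom.id_apply, smul_add]

theorem kroneckerSum_apply (A : Matrix n n R) : kroneckerSum A = A ⊗ₖ 1 + 1 ⊗ₖ A := rfl

variable [Fintype n]

theorem commute_swapMatrix_kroneckerSum (A : Matrix n n R) :
    Commute (swapMatrix n R) (kroneckerSum A) := by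
  rw [commute_iff_eq, kroneckerSum_apply, mul_add, add_mul, swapMatrix_mul_kronecker,
    swapMatrix_mul_kronecker, add_comm]

variable {M : Matrix (n × n) (n × n) R}

theorem entries_of_commute_kroneckerSum_single {i j : n}
    (hM : Commute (kroneckerSum (single i j 1)) M) (a b c e : n) :
    (if a = i then M (j, b) (c, e) else 0) + (if b = i then M (a, j) (c, e) else 0) =
      (if c = j then M (a, b) (i, e) else 0) + (if e = j then M (a, b) (c, i) else 0) := by
  have h := congrFun₂ hM.eq (a, b) (c, e)
  simpa [kroneckerSum_apply, mul_apply, Fintype.sum_prod_type, single_apply, one_apply, ite_and,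
    add_mul, mul_add, Finset.sum_add_distrib, eq_comm] using h

theorem card_smul_trace_blocks (hM : ∀ A, Commute (kroneckerSum A) M) :
    (Fintype.card n : R) • (blocks M).trace = M.trace • 1 := by
  have entry (i j b e : n) : (if b = i then (blocks M).trace j e else 0) =
      if e = j then (blocks M).trace b i else 0 := by
    have h := Finset.sum_congr rfl fun a (_ : a ∈ Finset.univ) =>
      entries_of_commute_kroneckerSum_single (hM (single i j 1)) a b a e
    simpa [Finset.sum_add_distrib, trace, Matrix.sum_apply, blocks_apply] using h
  rw [← trace_blocks_trace]
  ext j e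
  have h := Finset.sum_congr rfl fun i (_ : i ∈ Finset.univ) => entry i j i e
  simpa [one_apply, eq_comm, trace] using h

theorem card_smul_add_swapMatrix_mul (hM : ∀ A, Commute (kroneckerSum A) M) :
    (Fintype.card n : R) • ((Fintype.card n : R) • M + swapMatrix n R * M) =
      M.trace • 1 + (swapMatrix n R * M).trace • swapMatrix n R := by
  have hMF (A : Matrix n n R) : Commute (kroneckerSum A) (M * swapMatrix n R) :=
    (hM A).mul_right (commute_swapMatrix_kroneckerSum A).symm
  have contraction : (Fintype.card n : R) • M + swapMatrix n R * M =
      1 ⊗ₖ (blocks M).trace + 1 ⊗ₖ (blocks (M * swapMatrix n R)).trace * swapMatrix n R := by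
    ext ⟨j, b⟩ ⟨c, e⟩
    have h := Finset.sum_congr rfl fun a (_ : a ∈ Finset.univ) =>
      entries_of_commute_kroneckerSum_single (hM (single a j 1)) a b c e
    simpa [Finset.sum_add_distrib, trace, Matrix.sum_apply, blocks_apply, mul_swapMatrix_apply,
      swapMatrix_mul_apply, one_apply, eq_comm, -map_mul] using h
  rw [contraction, smul_add, ← smul_mul_assoc, ← kronecker_smul, ← kronecker_smul,
    card_smul_trace_blocks hM, card_smul_trace_blocks hMF, kronecker_smul, kronecker_smul,
    one_kronecker_one, smul_mul_assoc, Matrix.one_mul, trace_mul_comm M]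

end KroneckerSum

section UnitarySquares

theorem one_add_smul_mem_unitary {R A : Type*} [CommRing R] [StarRing R] [Ring A] [StarRing A]
    [Algebra R A] [StarModule R A] {P : A} (hP : IsStarProjection P) {z : R}
    (hz : star z * z = 1) :
    1 + (z - 1) • P ∈ unitary A := by
  have key (w v : R) (h : w * v = 1) : (1 + (w - 1) • P) * (1 + (v - 1) • P) = 1 := by
    have hcoeff : w - 1 + (v - 1) + (w - 1) * (v - 1) = 0 := by linear_combination h
    calc (1 + (w - 1) • P) * (1 + (v - 1) • P)
        = 1 + (w - 1 + (v - 1) + (w - 1) * (v - 1)) • P := by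
          rw [add_mul, mul_add, mul_add, smul_mul_smul_comm, hP.isIdempotentElem.eq, one_mul,
            mul_one, one_mul]
          module
      _ = 1 := by rw [hcoeff, zero_smul, add_zero]
  have hstar : star (1 + (z - 1) • P) = 1 + (star z - 1) • P := by
    rw [star_add, star_one, star_smul, star_sub, star_one, hP.isSelfAdjoint.star_eq]
  exact ⟨by rw [hstar, key _ _ hz], by rw [hstar, key _ _ (by rw [mul_comm, hz])]⟩

variable {n : Type*}

theorem span_isStarProjection [Fintype n] :
    Submodule.span ℂ {P : Matrix n n ℂ | IsStarProjection P} = ⊤ := by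
  classical
  rw [eq_top_iff, ← span_selfAdjoint, Submodule.span_le]
  intro A hA
  have hA : A.IsHermitian := hA
  rw [hA.spectral_theorem, ← sum_single_eq_diagonal, map_sum]
  refine Submodule.sum_mem _ fun k _ => ?_
  have hk : IsStarProjection (single k k (1 : ℂ)) :=
    ⟨by simp [IsIdempotentElem], by simp [IsSelfAdjoint, star_eq_conjTranspose]⟩
  rw [← mul_one ((RCLike.ofReal ∘ hA.eigenvalues) k : ℂ), ← smul_eq_mul, ← smul_single, map_smul]
  exact Submodule.smul_mem _ _ (Submodule.subset_span (hk.map _))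

variable [DecidableEq n]

-- Eliminates `P ⊗ P` between the Kronecker squares of `1 + (z - 1) P` for `z = -1` and `z = i`.
theorem kroneckerSum_eq_sub_sub (P : Matrix n n ℂ) :
    kroneckerSum P = (1 + Complex.I / 2) • 1 -
      (Complex.I / 2) • ((1 + (-1 - 1 : ℂ) • P) ⊗ₖ (1 + (-1 - 1 : ℂ) • P)) -
        (1 + (Complex.I - 1) • P) ⊗ₖ (1 + (Complex.I - 1) • P) := by
  have expand (t : ℂ) : (1 + t • P) ⊗ₖ (1 + t • P) =
      1 + t • kroneckerSum P + t ^ 2 • (P ⊗ₖ P) := by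
    simp only [add_kronecker, kronecker_add, smul_kronecker, kronecker_smul, one_kronecker_one,
      kroneckerSum_apply]
    module
  have hsq : (Complex.I - 1) ^ 2 = -2 * Complex.I := by linear_combination Complex.I_sq
  rw [expand, expand, hsq]
  module

variable [Fintype n]

/-- The Kronecker square `V ↦ V ⊗ V` as a homomorphism of unitary groups. -/
def kroneckerSquare : unitaryGroup n ℂ →* unitaryGroup (n × n) ℂ where
  toFun V := ⟨V.1 ⊗ₖ V.1, kronecker_mem_unitary V.2 V.2⟩
  map_one' := Subtype.ext one_kronecker_one
  map_mul' V W := Subtype.ext (mul_kronecker_mul V.1 W.1 V.1 W.1)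

theorem commute_kroneckerSum_of_forall_unitary {M : Matrix (n × n) (n × n) ℂ}
    (hM : ∀ V : unitaryGroup n ℂ, Commute (kroneckerSquare V).1 M) (A : Matrix n n ℂ) :
    Commute (kroneckerSum A) M := by
  have hA : A ∈ Submodule.span ℂ {P : Matrix n n ℂ | IsStarProjection P} :=
    span_isStarProjection (n := n) ▸ Submodule.mem_top
  induction hA using Submodule.span_induction with
  | zero => simp
  | add A B _ _ hA hB => simpa only [map_add] using hA.add_left hB
  | smul c A _ hA => simpa only [map_smul] using hA.smul_left c
  | mem P hP =>
    have hV (z : ℂ) (hz : star z * z = 1) :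
        Commute ((1 + (z - 1) • P) ⊗ₖ (1 + (z - 1) • P)) M :=
      hM ⟨1 + (z - 1) • P, one_add_smul_mem_unitary hP hz⟩
    rw [kroneckerSum_eq_sub_sub]
    exact (((Commute.one_left M).smul_left _).sub_left ((hV (-1) (by simp)).smul_left _)).sub_left
      (hV Complex.I (by simp))

theorem continuous_kroneckerSquare : Continuous (kroneckerSquare (n := n)) := by
  have entry (i j : n) : Continuous fun V : unitaryGroup n ℂ => V.1 i j :=
    continuous_subtype_val.matrix_elem i j
  exact Continuous.subtype_mk
    (continuous_matrix fun (p q : n × n) => (entry p.1 q.1).mul (entry p.2 q.2)) _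

open scoped Matrix.Norms.L2Operator in
instance : CompactSpace (unitaryGroup n ℂ) :=
  isCompact_iff_compactSpace.1 <|
    (isCompact_closedBall (0 : Matrix n n ℂ) ‖(1 : Matrix n n ℂ)‖).of_isClosed_subset
      isClosed_unitary fun V hV => by
        simpa using (CStarRing.norm_mem_unitary_mul 1 hV).le

end UnitarySquares

section GroupAverage

variable {G A : Type*} [Group G] [MeasurableSpace G] [MeasurableMul G]
  [NormedRing A] [NormedSpace ℝ A] [IsScalarTower ℝ A A] [SMulCommClass ℝ A A] [StarRing A]
  {μ : Measure G} [μ.IsMulLeftInvariant]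

theorem commute_integral_conj (R : G →* unitary A) {x : A}
    (hx : Integrable (fun g => (R g : A) * x * star (R g : A)) μ) (h : G) :
    Commute (R h : A) (∫ g, (R g : A) * x * star (R g : A) ∂μ) := by
  have shift (g : G) : (R h : A) * (R g * x * star (R g : A)) =
      R (h * g) * x * star (R (h * g) : A) * R h := by
    simp only [map_mul, Submonoid.coe_mul, star_mul, mul_assoc, Unitary.coe_star_mul_self, mul_one]
  calc (R h : A) * ∫ g, (R g : A) * x * star (R g : A) ∂μ
      = ∫ g, (R (h * g) : A) * x * star (R (h * g) : A) * R h ∂μ := by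
        simp only [← integral_const_mul_of_integrable hx, shift]
    _ = ∫ g, (R g : A) * x * star (R g : A) * R h ∂μ :=
        integral_mul_left_eq_self (fun g => (R g : A) * x * star (R g : A) * R h) h
    _ = (∫ g, (R g : A) * x * star (R g : A) ∂μ) * R h := integral_mul_const_of_integrable hx

end GroupAverage

section Twirl

open scoped Matrix.Norms.L2Operator

variable {n : Type*} [Fintype n] [DecidableEq n]

/-- The conjugate `(V ⊗ V) X (V ⊗ V)†`. -/
def conjKroneckerSquare (V : unitaryGroup n ℂ) (X : Matrix (n × n) (n × n) ℂ) :
    Matrix (n × n) (n × n) ℂ :=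
  (kroneckerSquare V).1 * X * star (kroneckerSquare V).1

theorem trace_conjKroneckerSquare (V : unitaryGroup n ℂ) (X : Matrix (n × n) (n × n) ℂ) :
    (conjKroneckerSquare V X).trace = X.trace := by
  rw [conjKroneckerSquare, trace_mul_cycle, Unitary.coe_star_mul_self, Matrix.one_mul]

variable [MeasurableSpace (unitaryGroup n ℂ)]

/-- The twofold twirl of `X`: the average of `(V ⊗ V) X (V ⊗ V)†` over the unitary group. -/
def twirl (μ : Measure (unitaryGroup n ℂ)) (X : Matrix (n × n) (n × n) ℂ) :
    Matrix (n × n) (n × n) ℂ :=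
  ∫ V, conjKroneckerSquare V X ∂μ

/-- A finite family of unitaries is a unitary 2-design when its uniform average of
`(V ⊗ V) X (V ⊗ V)†` agrees with the twofold twirl for every `X`. -/
def IsUnitaryTwoDesign {Θ : Type*} [Fintype Θ] (μ : Measure (unitaryGroup n ℂ))
    (U : Θ → unitaryGroup n ℂ) : Prop :=
  ∀ X, (Fintype.card Θ : ℂ)⁻¹ • ∑ θ, conjKroneckerSquare (U θ) X = twirl μ X

variable [BorelSpace (unitaryGroup n ℂ)] {μ : Measure (unitaryGroup n ℂ)}

theorem integrable_conjKroneckerSquare [IsFiniteMeasure μ] (X : Matrix (n × n) (n × n) ℂ) :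
    Integrable (fun V => conjKroneckerSquare V X) μ := by
  have h : Continuous fun V : unitaryGroup n ℂ => (kroneckerSquare V).1 :=
    continuous_kroneckerSquare.subtype_val
  exact ((h.mul continuous_const).mul h.star).integrable_of_hasCompactSupport (.of_compactSpace _)

theorem twirl_apply [IsFiniteMeasure μ] (X : Matrix (n × n) (n × n) ℂ) (p q : n × n) :
    twirl μ X p q = ∫ V, conjKroneckerSquare V X p q ∂μ :=
  ((entryLinearMap ℂ ℂ p q).toContinuousLinearMap.integral_comp_comm
    (integrable_conjKroneckerSquare X)).symm

theorem trace_twirl [IsProbabilityMeasure μ] (X : Matrix (n × n) (n × n) ℂ) :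
    (twirl μ X).trace = X.trace := by
  let tr : Matrix (n × n) (n × n) ℂ →L[ℂ] ℂ := (traceLinearMap (n × n) ℂ ℂ).toContinuousLinearMap
  calc (twirl μ X).trace = ∫ V, tr (conjKroneckerSquare V X) ∂μ :=
        (tr.integral_comp_comm (integrable_conjKroneckerSquare X)).symm
    _ = X.trace := by simp [tr, trace_conjKroneckerSquare]

theorem mul_twirl [IsFiniteMeasure μ] {Y : Matrix (n × n) (n × n) ℂ}
    (hY : ∀ V : unitaryGroup n ℂ, Commute Y (kroneckerSquare V).1)
    (X : Matrix (n × n) (n × n) ℂ) : Y * twirl μ X = twirl μ (Y * X) := by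
  have hconj (V : unitaryGroup n ℂ) :
      Y * conjKroneckerSquare V X = conjKroneckerSquare V (Y * X) := by
    simp only [conjKroneckerSquare, ← Matrix.mul_assoc, (hY V).eq]
  simp only [twirl, ← hconj, integral_const_mul_of_integrable (integrable_conjKroneckerSquare X)]

theorem commute_twirl [IsFiniteMeasure μ] [μ.IsMulLeftInvariant] (X : Matrix (n × n) (n × n) ℂ)
    (W : unitaryGroup n ℂ) : Commute (kroneckerSquare W).1 (twirl μ X) :=
  commute_integral_conj (A := Matrix (n × n) (n × n) ℂ) kroneckerSquare
    (integrable_conjKroneckerSquare X) W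

end Twirl

section CoincidenceProjection

variable {n R : Type*} [Fintype n] [DecidableEq n] [CommSemiring R]

variable (n R) in
/-- The projection `∑ₖ |k⟩⟨k| ⊗ |k⟩⟨k|` onto the event that measuring both tensor factors in the
standard basis yields the same outcome. -/
def coincidenceProj : Matrix (n × n) (n × n) R :=
  ∑ k, single k k 1 ⊗ₖ single k k 1

theorem trace_coincidenceProj : (coincidenceProj n R).trace = Fintype.card n := by
  simp [coincidenceProj, trace_sum, trace_kronecker]

theorem swapMatrix_mul_coincidenceProj :
    swapMatrix n R * coincidenceProj n R = coincidenceProj n R := by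
  rw [coincidenceProj, Finset.mul_sum]
  refine Finset.sum_congr rfl fun k _ => ?_
  ext p q
  rw [swapMatrix_mul_apply, single_kronecker_single]
  simp [single_apply, Prod.ext_iff, and_comm]

variable [MeasurableSpace (unitaryGroup n ℂ)] [BorelSpace (unitaryGroup n ℂ)]

theorem twirl_coincidenceProj (μ : Measure (unitaryGroup n ℂ)) [IsProbabilityMeasure μ]
    [μ.IsMulLeftInvariant] :
    twirl μ (coincidenceProj n ℂ) = (Fintype.card n + 1 : ℂ)⁻¹ • (1 + swapMatrix n ℂ) := by
  set T := twirl μ (coincidenceProj n ℂ) with hT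
  have hswap : swapMatrix n ℂ * T = T := by
    rw [hT, mul_twirl (fun V => swapMatrix_mul_kronecker V.1 V.1), swapMatrix_mul_coincidenceProj]
  have htrace : T.trace = Fintype.card n := by rw [hT, trace_twirl, trace_coincidenceProj]
  have hcard := card_smul_add_swapMatrix_mul
    (commute_kroneckerSum_of_forall_unitary (commute_twirl (μ := μ) (coincidenceProj n ℂ)))
  rw [← hT, hswap, htrace, ← smul_add] at hcard
  cases isEmpty_or_nonempty n
  · exact Subsingleton.elim _ _
  · have hT_add : (Fintype.card n + 1 : ℂ) • T = 1 + swapMatrix n ℂ := by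
      rw [add_smul, one_smul]
      exact smul_right_injective _ (Nat.cast_ne_zero.2 Fintype.card_ne_zero) hcard
    rw [← hT_add, inv_smul_smul₀ (Nat.cast_add_one_ne_zero _)]

end CoincidenceProjection

section Overlap

variable {m n R : Type*} [Fintype m] [Fintype n] [CommSemiring R]

/-- For `ρ` on `A ⊗ B` with blocks `ρ_{ac}` on `B`, the operator on `A ⊗ A` with entries
`Tr[S ρ_{ac} S ρ_{bd}]`. It turns quadratic expressions in the conditional states of `B` into
linear functionals on the operators of `A ⊗ A`. -/
def overlapMatrix (S : Matrix n n R) (ρ : Matrix (m × n) (m × n) R) :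
    Matrix (m × m) (m × m) R :=
  of fun p q => (S * blocks ρ p.1 q.1 * S * blocks ρ p.2 q.2).trace

theorem trace_kronecker_mul_overlapMatrix [DecidableEq n] (S : Matrix n n R)
    (ρ : Matrix (m × n) (m × n) R) (P Q : Matrix m m R) :
    ((P ⊗ₖ Q) * overlapMatrix S ρ).trace =
      (S * (blocks ((P ⊗ₖ 1) * ρ)).trace * S * (blocks ((Q ⊗ₖ 1) * ρ)).trace).trace := by
  have hblocks (P : Matrix m m R) : (blocks ((P ⊗ₖ 1) * ρ)).trace =
      ∑ a, ∑ b, P a b • blocks ρ b a :=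
    Finset.sum_congr rfl fun a _ => blocks_kronecker_one_mul P ρ a a
  calc ((P ⊗ₖ Q) * overlapMatrix S ρ).trace
      = ∑ a, ∑ c, ∑ b, ∑ d, P a b * Q c d * (S * blocks ρ b a * S * blocks ρ d c).trace := by
        simp only [trace, diag_apply, mul_apply, Fintype.sum_prod_type]
        rfl
    _ = ∑ a, ∑ b, ∑ c, ∑ d, P a b * Q c d * (S * blocks ρ b a * S * blocks ρ d c).trace :=
        Finset.sum_congr rfl fun _ _ => Finset.sum_comm
    _ = ∑ a, ∑ b, P a b * (S * blocks ρ b a * S * (blocks ((Q ⊗ₖ 1) * ρ)).trace).trace := by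
        simp only [hblocks Q, Finset.mul_sum, trace_sum, mul_smul_comm, trace_smul, smul_eq_mul,
          mul_assoc]
    _ = _ := by
        simp only [hblocks P, Finset.mul_sum, Finset.sum_mul, trace_sum, mul_smul_comm,
          smul_mul_assoc, trace_smul, smul_eq_mul]

theorem trace_swapMatrix_mul_overlapMatrix [DecidableEq m] (S : Matrix n n R)
    (ρ : Matrix (m × n) (m × n) R) :
    (swapMatrix m R * overlapMatrix S ρ).trace =
      ((1 ⊗ₖ S) * ρ * ((1 ⊗ₖ S) * ρ)).trace := by
  set N := (1 ⊗ₖ S) * ρ with hN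
  have hdiag (b : m) :
      (blocks N * blocks N) b b = ∑ a, S * blocks ρ b a * S * blocks ρ a b := by
    simp only [mul_apply, hN, blocks_one_kronecker_mul, Matrix.mul_assoc]
  calc (swapMatrix m R * overlapMatrix S ρ).trace
      = ∑ a, ∑ b, (S * blocks ρ b a * S * blocks ρ a b).trace := by
        simp only [trace, diag_apply, swapMatrix_mul_apply, Fintype.sum_prod_type]
        rfl
    _ = ∑ b, ((blocks N * blocks N) b b).trace := by
        simp only [hdiag, trace_sum]
        exact Finset.sum_comm
    _ = (N * N).trace := by
        rw [← trace_sum, ← trace_blocks_trace (N * N), map_mul blocks N N]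
        rfl

end Overlap

section Design

variable {dA dB : ℕ}

theorem ptraceA_eq_trace_blocks (ρ : Matrix (Fin dA × Fin dB) (Fin dA × Fin dB) ℂ) :
    ptraceA ρ = (blocks ρ).trace := by
  ext i j
  simp [ptraceA, trace, Matrix.sum_apply, blocks_apply]

theorem pgTerm_eq_trace_mul_overlapMatrix (ρ : Matrix (Fin dA × Fin dB) (Fin dA × Fin dB) ℂ)
    (v : Fin dA → ℂ) :
    pgTerm ρ v = ((vecMulVec v (star v) ⊗ₖ vecMulVec v (star v)) *
      overlapMatrix (mpow (ptraceA ρ) (-(1 / 2))) ρ).trace := by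
  rw [trace_kronecker_mul_overlapMatrix, ← ptraceA_eq_trace_blocks]
  rfl

theorem sum_pgTerm_col (ρ : Matrix (Fin dA × Fin dB) (Fin dA × Fin dB) ℂ)
    (V : unitaryGroup (Fin dA) ℂ) :
    ∑ k, pgTerm ρ (fun a => V.1 a k) = (conjKroneckerSquare V (coincidenceProj (Fin dA) ℂ) *
      overlapMatrix (mpow (ptraceA ρ) (-(1 / 2))) ρ).trace := by
  have rankOne (k : Fin dA) : vecMulVec (fun a => V.1 a k) (star fun a => V.1 a k) =
      V.1 * single k k 1 * star V.1 := by
    ext i j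
    simp [vecMulVec_apply, mul_apply, single_apply, star_apply, ite_and]
  have hconj : conjKroneckerSquare V (coincidenceProj (Fin dA) ℂ) = ∑ k,
      (V.1 * single k k 1 * star V.1) ⊗ₖ (V.1 * single k k 1 * star V.1) := by
    simp only [conjKroneckerSquare, coincidenceProj, Finset.mul_sum, Finset.sum_mul,
      mul_kronecker_mul]
    refine Finset.sum_congr rfl fun k _ => ?_
    congr 1
    exact conjTranspose_kronecker _ _
  simp only [pgTerm_eq_trace_mul_overlapMatrix, rankOne, hconj, Finset.sum_mul, trace_sum]

variable {ρ : Matrix (Fin dA × Fin dB) (Fin dA × Fin dB) ℂ}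

theorem trace_overlapMatrix_mpow (hρB : (ptraceA ρ).PosDef) :
    (overlapMatrix (mpow (ptraceA ρ) (-(1 / 2))) ρ).trace = ρ.trace := by
  rw [← Matrix.one_mul (overlapMatrix _ ρ), ← one_kronecker_one, trace_kronecker_mul_overlapMatrix,
    one_kronecker_one, Matrix.one_mul, ← ptraceA_eq_trace_blocks, mpow_neg_half_mul_self_mul hρB,
    Matrix.one_mul, ptraceA_eq_trace_blocks, trace_blocks_trace]

theorem trace_swapMatrix_mul_overlapMatrix_mpow (hρB : (ptraceA ρ).PosDef) :
    (swapMatrix (Fin dA) ℂ * overlapMatrix (mpow (ptraceA ρ) (-(1 / 2))) ρ).trace =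
      (tildeRho ρ * tildeRho ρ).trace := by
  set Q := (1 : Matrix (Fin dA) (Fin dA) ℂ) ⊗ₖ mpow (ptraceA ρ) (-(1 / 4)) with hQ
  have hQQ : 1 ⊗ₖ mpow (ptraceA ρ) (-(1 / 2)) = Q * Q := by
    rw [hQ, ← mul_kronecker_mul, Matrix.one_mul, mpow_mul_mpow hρB]
    norm_num
  rw [trace_swapMatrix_mul_overlapMatrix, hQQ]
  calc (Q * Q * ρ * (Q * Q * ρ)).trace = (Q * (Q * ρ * Q * Q * ρ)).trace := by
        simp only [mul_assoc]
    _ = (Q * ρ * Q * Q * ρ * Q).trace := trace_mul_comm _ _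
    _ = (Q * ρ * Q * (Q * ρ * Q)).trace := by simp only [mul_assoc]

theorem uncertainty_equality_unitary_design_general (hρB : (ptraceA ρ).PosDef)
    (μ : Measure (unitaryGroup (Fin dA) ℂ)) [IsProbabilityMeasure μ] [μ.IsMulLeftInvariant]
    {Θ : Type*} [Fintype Θ] {U : Θ → unitaryGroup (Fin dA) ℂ} (hU : IsUnitaryTwoDesign μ U) :
    (Fintype.card Θ : ℂ)⁻¹ * ∑ θ, ∑ k, pgTerm ρ (fun a => (U θ).1 a k) =
      (ρ.trace + (tildeRho ρ * tildeRho ρ).trace) / (dA + 1) := by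
  set K := overlapMatrix (mpow (ptraceA ρ) (-(1 / 2))) ρ with hK
  calc (Fintype.card Θ : ℂ)⁻¹ * ∑ θ, ∑ k, pgTerm ρ (fun a => (U θ).1 a k)
      = (twirl μ (coincidenceProj (Fin dA) ℂ) * K).trace := by
        simp only [← hU (coincidenceProj (Fin dA) ℂ), sum_pgTerm_col, smul_mul_assoc, trace_smul,
          Finset.sum_mul, trace_sum, smul_eq_mul, hK]
    _ = (dA + 1 : ℂ)⁻¹ * (K.trace + (swapMatrix (Fin dA) ℂ * K).trace) := by
        rw [twirl_coincidenceProj, smul_mul_assoc, trace_smul, add_mul, trace_add, Matrix.one_mul,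
          Fintype.card_fin, smul_eq_mul]
    _ = (ρ.trace + (tildeRho ρ * tildeRho ρ).trace) / (dA + 1) := by
        rw [trace_overlapMatrix_mpow hρB, trace_swapMatrix_mul_overlapMatrix_mpow hρB,
          inv_mul_eq_div]

end Design

/-- uncertainty equality for measurements in the bases `{U_θ|k⟩}_k`
coming from a unitary 2-design `{U_θ}` (twofold twirl = Haar average w.r.t. the Haar
probability measure `μ` on `U(d)`, characterized as a left-invariant Borel probability
measure): `(1/|Θ|) Σ_{θ,k} Tr[ρ_B^{-1/2} ρ_B^{θ_k} ρ_B^{-1/2} ρ_B^{θ_k}]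
= (1 + Tr[ρ̃_AB²])/(d_A+1)`, i.e. `H₂(K|BΘ) = log₂(d_A+1) − log₂(2^{−H₂(A|B)} + 1)`. -/
theorem uncertainty_equality_unitary_design
    (dA dB : ℕ) (hdA : 1 ≤ dA) (hdB : 1 ≤ dB)
    (μ : Measure (Matrix.unitaryGroup (Fin dA) ℂ)) [IsProbabilityMeasure μ]
    (hμinv : ∀ V : Matrix.unitaryGroup (Fin dA) ℂ,
      μ.map (fun U => V * U) = μ)
    (Θ : Type) [Fintype Θ] [Nonempty Θ]
    (U : Θ → Matrix.unitaryGroup (Fin dA) ℂ)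
    (hdesign : ∀ (X : Matrix (Fin dA × Fin dA) (Fin dA × Fin dA) ℂ) (p q : Fin dA × Fin dA),
      ((Fintype.card Θ : ℂ))⁻¹ *
          (∑ θ, (((U θ : Matrix (Fin dA) (Fin dA) ℂ) ⊗ₖ (U θ : Matrix (Fin dA) (Fin dA) ℂ)) * X *
            (((U θ : Matrix (Fin dA) (Fin dA) ℂ) ⊗ₖ (U θ : Matrix (Fin dA) (Fin dA) ℂ))ᴴ)) p q)
        = ∫ V : Matrix.unitaryGroup (Fin dA) ℂ,
            (((V : Matrix (Fin dA) (Fin dA) ℂ) ⊗ₖ (V : Matrix (Fin dA) (Fin dA) ℂ)) * X *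
              (((V : Matrix (Fin dA) (Fin dA) ℂ) ⊗ₖ (V : Matrix (Fin dA) (Fin dA) ℂ))ᴴ)) p q ∂μ)
    (ρ : Matrix (Fin dA × Fin dB) (Fin dA × Fin dB) ℂ)
    (hρ : ρ.PosSemidef) (hρtr : ρ.trace = 1)
    (hρB : (ptraceA ρ).PosDef) :
    ((Fintype.card Θ : ℂ))⁻¹ *
        ∑ θ, ∑ k : Fin dA,
          pgTerm ρ (fun a => (U θ : Matrix (Fin dA) (Fin dA) ℂ) a k)
      = (1 + (tildeRho ρ * tildeRho ρ).trace) / (dA + 1 : ℂ) := by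
  have : μ.IsMulLeftInvariant := ⟨hμinv⟩
  have hU : IsUnitaryTwoDesign μ U := fun X => by
    ext p q
    rw [twirl_apply, Matrix.smul_apply, Matrix.sum_apply]
    exact hdesign X p q
  rw [uncertainty_equality_unitary_design_general hρB μ hU, hρtr]

end
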